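/- arXiv:1603.07628 — 2 statements merged into one kernel-verified Lean document; each statement's English description precedes it below -/
import Mathlib

section
/- (Proposition 13, mean-value representation of the MMSE drop.) Let X be a real random variable with E[X²] < ∞ and let 0 < snr < snr0. Then there exists snr_c ∈ (snr, snr0) such that mmse(X, snr) − mmse(X, snr0) = E[(Var(X|Y_{snr_c}))²]·(snr0 − snr). Moreover, the constant satisfies E[(Var(X|Y_{snr_c}))²] ≤ sup_{γ ∈ (snr, snr0)} E[(Var(X|Y_γ))²] ≤ E[X⁴]. -/
open MeasureTheory ProbabilityTheory Real
open scoped ENNReal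

noncomputable section

/-- The scalar observation `Y_snr = √snr · X + Z`. -/
def obsS {Ω : Type*} (X Z : Ω → ℝ) (snr : ℝ) : Ω → ℝ :=
  fun ω => Real.sqrt snr * X ω + Z ω

/-- The σ-algebra generated by the observation `Y_snr`. -/
def obsSigmaS {Ω : Type*} [MeasurableSpace Ω] (X Z : Ω → ℝ) (snr : ℝ) : MeasurableSpace Ω :=
  MeasurableSpace.comap (obsS X Z snr) inferInstance

/-- `mmse(X, snr) = E[(X − E[X | Y_snr])²]`. -/
def mmseS {Ω : Type*} [MeasurableSpace Ω] (μ : Measure Ω) (X Z : Ω → ℝ) (snr : ℝ) : ℝ :=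
  ∫ ω, (X ω - (μ[X | obsSigmaS X Z snr]) ω) ^ 2 ∂μ

/-- Conditional variance `Var(X|m) = E[X²|m] − (E[X|m])²`. -/
def condVarS {Ω : Type*} (m : MeasurableSpace Ω) [MeasurableSpace Ω] (μ : Measure Ω)
    (X : Ω → ℝ) : Ω → ℝ :=
  fun ω => (μ[fun ω' => (X ω') ^ 2 | m]) ω - ((μ[X | m]) ω) ^ 2

/-- `E[(Var(X|Y_γ))²]`, the negative of the derivative of the MMSE at `γ`. -/
def varSq {Ω : Type*} [MeasurableSpace Ω] (μ : Measure Ω) (X Z : Ω → ℝ) (γ : ℝ) : ℝ :=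
  ∫ ω, (condVarS (obsSigmaS X Z γ) μ X ω) ^ 2 ∂μ

/-!
Dividing `Y_snr` by `√snr` turns the observation into `X + U` with `U ~ N(0, t)` and `t = 1 / snr`.
Given `X + U`, estimating `X` and estimating `U` have the same error, so only the conditional
moments `mₖ(t, w) = E[U ^ k | X + U = w]` of the noise matter; by Bayes' formula these are
quotients of smooth functions of `(t, w)`, whatever the law of `X`. They satisfy differential
equations in `w` and in `t`, and differentiating `mmse = ∫ (m₂ - m₁²) p` in `t` (`p` being the
density of `X + U`), then integrating by parts in `w`, gives `d mmse / dt = E[Var²] / t²`, that is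
`d mmse / d snr = -E[Var²]`. The mean value theorem yields the intermediate point. The bound by
`E[X⁴]` is conditional Jensen: `Var(X | Y)² ≤ E[X² | Y]² ≤ E[X⁴ | Y]`.
-/

/-! ### Moments of the noise density -/

lemma gaussianPDFReal_zero_toNNReal {t : ℝ} (ht : 0 ≤ t) (u : ℝ) :
    gaussianPDFReal 0 t.toNNReal u = (√(2 * π * t))⁻¹ * exp (-u ^ 2 / (2 * t)) := by
  simp [gaussianPDFReal, ht]

lemma hasDerivAt_gaussianPDFReal_zero (v : NNReal) (u : ℝ) :
    HasDerivAt (gaussianPDFReal 0 v) (-(u * gaussianPDFReal 0 v u / v)) u := by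
  have h : HasDerivAt (fun u : ℝ => -(u - 0) ^ 2 / (2 * v)) (-u / v) u := by
    refine (((hasDerivAt_id u).sub_const 0).pow 2).neg.div_const (2 * (v : ℝ)) |>.congr_deriv ?_
    simp only [id, Nat.cast_ofNat]
    ring
  refine (h.exp.const_mul (√(2 * π * v))⁻¹).congr_deriv ?_
  simp only [gaussianPDFReal]
  ring

lemma hasDerivAt_gaussianPDFReal_variance {t : ℝ} (ht : 0 < t) (u : ℝ) :
    HasDerivAt (fun t : ℝ => gaussianPDFReal 0 t.toNNReal u)
      ((u ^ 2 - t) / (2 * t ^ 2) * gaussianPDFReal 0 t.toNNReal u) t := by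
  have hp : 0 < 2 * π * t := by positivity
  have hs : √(2 * π * t) ≠ 0 := by positivity
  have hsqrt := (((hasDerivAt_id t).const_mul (2 * π)).sqrt (by simpa using hp.ne')).inv
    (by simpa using hs)
  have hexp : HasDerivAt (fun t : ℝ => exp (-u ^ 2 / (2 * t)))
      (exp (-u ^ 2 / (2 * t)) * (u ^ 2 / (2 * t ^ 2))) t := by
    refine HasDerivAt.exp (((hasDerivAt_const t (-u ^ 2)).div ((hasDerivAt_id t).const_mul 2)
      (by simpa using ht.ne')).congr_deriv ?_)
    simp only [id]
    field_simp
    ring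
  refine ((hsqrt.mul hexp).congr_deriv ?_).congr_of_eventuallyEq ?_
  · simp only [gaussianPDFReal_zero_toNNReal ht.le, id, mul_one, Pi.inv_apply, sq_sqrt hp.le]
    field_simp
    ring
  · filter_upwards [lt_mem_nhds ht] with s hs
    exact gaussianPDFReal_zero_toNNReal hs.le u

lemma gaussianPDFReal_zero_le_sqrt_mul {s T : ℝ} (hs : 0 < s) (hsT : s ≤ T) (u : ℝ) :
    gaussianPDFReal 0 s.toNNReal u ≤ √(T / s) * gaussianPDFReal 0 T.toNNReal u := by
  have hT : 0 < T := hs.trans_le hsT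
  have hnorm : √(T / s) * (√(2 * π * T))⁻¹ = (√(2 * π * s))⁻¹ := by
    rw [← sqrt_inv, ← sqrt_inv, ← sqrt_mul (by positivity)]
    congr 1
    field_simp
  rw [gaussianPDFReal_zero_toNNReal hs.le, gaussianPDFReal_zero_toNNReal hT.le, ← mul_assoc, hnorm,
    neg_div, neg_div]
  gcongr

/-- The weight `u ^ k φ_t(u)`, with `φ_t` the density of the noise `N(0, t)`. -/
def noiseWeight (k : ℕ) (t u : ℝ) : ℝ := u ^ k * gaussianPDFReal 0 t.toNNReal u

lemma noiseWeight_zero (t u : ℝ) : noiseWeight 0 t u = gaussianPDFReal 0 t.toNNReal u := by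
  simp [noiseWeight]

lemma noiseWeight_zero_nonneg (t u : ℝ) : 0 ≤ noiseWeight 0 t u :=
  (noiseWeight_zero t u).symm ▸ gaussianPDFReal_nonneg _ _ _

lemma continuous_noiseWeight (k : ℕ) (t : ℝ) : Continuous (noiseWeight k t) :=
  (continuous_pow k).mul
    (continuous_iff_continuousAt.2 fun u => (hasDerivAt_gaussianPDFReal_zero _ u).continuousAt)

lemma measurable_noiseWeight_sub (k : ℕ) (t : ℝ) :
    Measurable fun p : ℝ × ℝ => noiseWeight k t (p.2 - p.1) :=
  (continuous_noiseWeight k t).measurable.comp (measurable_snd.sub measurable_fst)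

lemma hasDerivAt_noiseWeight (k : ℕ) {t : ℝ} (ht : 0 ≤ t) (u : ℝ) :
    HasDerivAt (noiseWeight k t)
      (k * noiseWeight (k - 1) t u - noiseWeight (k + 1) t u / t) u := by
  refine ((hasDerivAt_pow k u).mul (hasDerivAt_gaussianPDFReal_zero _ u)).congr_deriv ?_
  simp only [noiseWeight, coe_toNNReal _ ht]
  ring

lemma hasDerivAt_noiseWeight_variance (k : ℕ) {t : ℝ} (ht : 0 < t) (u : ℝ) :
    HasDerivAt (fun t => noiseWeight k t u)
      ((noiseWeight (k + 2) t u - t * noiseWeight k t u) / (2 * t ^ 2)) t := by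
  refine ((hasDerivAt_gaussianPDFReal_variance ht u).const_mul (u ^ k)).congr_deriv ?_
  simp only [noiseWeight]
  ring

lemma abs_noiseWeight_le_two_mul (k : ℕ) {s T : ℝ} (hs : 0 < s) (hsT : s ≤ T) (hTs : T ≤ 4 * s)
    (u : ℝ) : |noiseWeight k s u| ≤ 2 * |noiseWeight k T u| := by
  have hsqrt : √(T / s) ≤ 2 := by
    rw [sqrt_le_left zero_le_two, div_le_iff₀ hs]
    linarith
  simp only [noiseWeight, abs_mul, abs_of_nonneg (gaussianPDFReal_nonneg _ _ _)]
  calc |u ^ k| * gaussianPDFReal 0 s.toNNReal u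
      ≤ |u ^ k| * (2 * gaussianPDFReal 0 T.toNNReal u) := by
        gcongr
        exact (gaussianPDFReal_zero_le_sqrt_mul hs hsT u).trans
          (mul_le_mul_of_nonneg_right hsqrt (gaussianPDFReal_nonneg _ _ _))
    _ = 2 * (|u ^ k| * gaussianPDFReal 0 T.toNNReal u) := by ring

lemma exists_abs_noiseWeight_le (k : ℕ) {t : ℝ} (ht : 0 < t) :
    ∃ C, ∀ u, |noiseWeight k t u| ≤ C := by
  have hlim : Filter.Tendsto (fun u : ℝ => |noiseWeight k t u|) (Filter.cocompact ℝ) (nhds 0) := by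
    have h := (tendsto_rpow_abs_mul_exp_neg_mul_sq_cocompact (a := 1 / (2 * t)) (by positivity)
      k).const_mul (√(2 * π * t))⁻¹
    rw [mul_zero] at h
    refine h.congr fun u => ?_
    rw [noiseWeight, gaussianPDFReal_zero_toNNReal ht.le, abs_mul, abs_mul, abs_exp,
      abs_of_nonneg (by positivity : 0 ≤ (√(2 * π * t))⁻¹), rpow_natCast, abs_pow, mul_left_comm]
    congr 3
    ring
  let f : ZeroAtInftyContinuousMap ℝ ℝ := ⟨⟨_, (continuous_noiseWeight k t).abs⟩, hlim⟩
  obtain ⟨C, hC⟩ := isBounded_iff_forall_norm_le.1 f.isBounded_range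
  exact ⟨C, fun u => (le_abs_self _).trans (hC _ ⟨u, rfl⟩)⟩

lemma integrable_noiseWeight (k : ℕ) {t : ℝ} (ht : 0 < t) : Integrable (noiseWeight k t) := by
  have h := (memLp_id_gaussianReal (μ := 0) (v := t.toNNReal) k).integrable_norm_pow'
  rw [gaussianReal_of_var_ne_zero _ (by simpa using ht),
    integrable_withDensity_iff_integrable_smul' (by fun_prop)
      (ae_of_all _ fun _ => gaussianPDF_lt_top)] at h
  refine h.mono (continuous_noiseWeight k t).aestronglyMeasurable (ae_of_all _ fun u => ?_)
  simp [noiseWeight, toReal_gaussianPDF, mul_comm]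

lemma integral_noiseWeight_two {t : ℝ} (ht : 0 < t) : ∫ u, noiseWeight 2 t u = t := by
  have h := variance_fun_id_gaussianReal (μ := 0) (v := t.toNNReal)
  rw [variance_eq_integral measurable_id'.aemeasurable, integral_id_gaussianReal,
    integral_gaussianReal_eq_integral_smul (by simpa using ht)] at h
  simpa [noiseWeight, mul_comm, ht.le] using h

/-- Chebyshev's integral inequality: symmetrise `∬ ρ(x)ρ(y)(f x - f y)(g x - g y) ≥ 0`. -/
lemma integral_mul_integral_le_of_monovary {α : Type*} [MeasurableSpace α] {μ : Measure α}
    [SFinite μ] {ρ f g : α → ℝ} (hρ : 0 ≤ ρ) (hfg : Monovary f g) (iρ : Integrable ρ μ)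
    (iρf : Integrable (ρ * f) μ) (iρg : Integrable (ρ * g) μ) (iρfg : Integrable (ρ * f * g) μ) :
    (∫ x, (ρ * f) x ∂μ) * ∫ x, (ρ * g) x ∂μ ≤ (∫ x, ρ x ∂μ) * ∫ x, (ρ * f * g) x ∂μ := by
  have hnonneg : 0 ≤ ∫ p : α × α, (ρ p.1 * (ρ * f * g) p.2 + (ρ * f * g) p.1 * ρ p.2
      - ((ρ * f) p.1 * (ρ * g) p.2 + (ρ * g) p.1 * (ρ * f) p.2)) ∂μ.prod μ := by
    refine integral_nonneg fun p => ?_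
    have hp := monovary_iff_forall_mul_nonneg.1 hfg p.1 p.2
    calc 0 ≤ ρ p.1 * ρ p.2 * ((f p.2 - f p.1) * (g p.2 - g p.1)) :=
          mul_nonneg (mul_nonneg (hρ _) (hρ _)) hp
      _ = _ := by
          simp only [Pi.mul_apply]
          ring
  rw [integral_sub ((iρ.mul_prod iρfg).fun_add (iρfg.mul_prod iρ))
      ((iρf.mul_prod iρg).fun_add (iρg.mul_prod iρf)),
    integral_add (iρ.mul_prod iρfg) (iρfg.mul_prod iρ),
    integral_add (iρf.mul_prod iρg) (iρg.mul_prod iρf)] at hnonneg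
  simp only [integral_prod_mul] at hnonneg
  linarith

/-- The smoothed moment `w ↦ E[(w - X) ^ k φ_t(w - X)]` of a signal `X` with law `ν`. -/
def smoothedMoment (ν : Measure ℝ) (k : ℕ) (t w : ℝ) : ℝ := ∫ x, noiseWeight k t (w - x) ∂ν

/-- The absolute version of `smoothedMoment`, used as a dominating function. -/
def smoothedAbsMoment (ν : Measure ℝ) (k : ℕ) (t w : ℝ) : ℝ := ∫ x, |noiseWeight k t (w - x)| ∂ν

/-- The density of `X + U` for independent `X ~ ν` and `U ~ N(0, t)`. -/
abbrev obsDensity (ν : Measure ℝ) (t w : ℝ) : ℝ := smoothedMoment ν 0 t w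

section SmoothedMoment

variable {ν : Measure ℝ} {t : ℝ}

lemma abs_smoothedMoment_le (k : ℕ) (t w : ℝ) :
    |smoothedMoment ν k t w| ≤ smoothedAbsMoment ν k t w :=
  abs_integral_le_integral_abs

lemma smoothedAbsMoment_zero (t w : ℝ) : smoothedAbsMoment ν 0 t w = obsDensity ν t w := by
  simp only [smoothedAbsMoment, obsDensity, smoothedMoment, noiseWeight_zero,
    abs_of_nonneg (gaussianPDFReal_nonneg _ _ _)]

lemma aestronglyMeasurable_noiseWeight_sub (k : ℕ) (t w : ℝ) :
    AEStronglyMeasurable (fun x => noiseWeight k t (w - x)) ν :=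
  ((continuous_noiseWeight k t).comp (by fun_prop)).aestronglyMeasurable

variable [IsFiniteMeasure ν]

lemma integrable_noiseWeight_sub (k : ℕ) (ht : 0 < t) (w : ℝ) :
    Integrable (fun x => noiseWeight k t (w - x)) ν := by
  obtain ⟨C, hC⟩ := exists_abs_noiseWeight_le k ht
  exact (integrable_const C).mono' (aestronglyMeasurable_noiseWeight_sub k t w)
    (ae_of_all _ fun x => hC _)

lemma obsDensity_pos [NeZero ν] (ht : 0 < t) (w : ℝ) : 0 < obsDensity ν t w := by
  have hpos : ∀ x, 0 < noiseWeight 0 t (w - x) := fun x => by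
    rw [noiseWeight_zero]
    exact gaussianPDFReal_pos _ _ _ (by simpa using ht)
  refine (integral_pos_iff_support_of_nonneg (fun x => (hpos x).le)
    (integrable_noiseWeight_sub 0 ht w)).2 ?_
  rw [Function.support_eq_univ fun x => (hpos x).ne']
  exact Measure.measure_univ_pos.2 (NeZero.ne ν)

lemma hasDerivAt_smoothedMoment (k : ℕ) (ht : 0 < t) (w : ℝ) :
    HasDerivAt (smoothedMoment ν k t)
      (k * smoothedMoment ν (k - 1) t w - smoothedMoment ν (k + 1) t w / t) w := by
  obtain ⟨C, hC⟩ := exists_abs_noiseWeight_le (k - 1) ht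
  obtain ⟨D, hD⟩ := exists_abs_noiseWeight_le (k + 1) ht
  have hi := fun j => integrable_noiseWeight_sub (ν := ν) j ht w
  have hint := ((hi (k - 1)).const_mul (k : ℝ)).sub ((hi (k + 1)).div_const t)
  refine (hasDerivAt_integral_of_dominated_loc_of_deriv_le (μ := ν)
    (F := fun w x => noiseWeight k t (w - x)) (bound := fun _ => k * C + D / t) Filter.univ_mem
    (.of_forall (aestronglyMeasurable_noiseWeight_sub k t)) (hi k)
    (F' := fun w x => k * noiseWeight (k - 1) t (w - x) - noiseWeight (k + 1) t (w - x) / t)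
    hint.aestronglyMeasurable (ae_of_all _ fun x w _ => (norm_sub_le _ _).trans ?_)
    (integrable_const _) (ae_of_all _ fun x w _ =>
      (hasDerivAt_noiseWeight k ht.le (w - x)).comp_sub_const w x)).2.congr_deriv ?_
  · rw [norm_mul, norm_div, norm_of_nonneg (Nat.cast_nonneg k), norm_of_nonneg ht.le]
    exact add_le_add (mul_le_mul_of_nonneg_left (hC _) (Nat.cast_nonneg k))
      (div_le_div_of_nonneg_right (hD _) ht.le)
  · rw [integral_sub ((hi _).const_mul _) ((hi _).div_const _), integral_const_mul, integral_div]
    rfl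

lemma continuous_smoothedMoment (k : ℕ) (ht : 0 < t) : Continuous (smoothedMoment ν k t) :=
  continuous_iff_continuousAt.2 fun w => (hasDerivAt_smoothedMoment k ht w).continuousAt

lemma hasDerivAt_smoothedMoment_variance (k : ℕ) (ht : 0 < t) (w : ℝ) :
    HasDerivAt (fun t => smoothedMoment ν k t w)
      ((smoothedMoment ν (k + 2) t w - t * smoothedMoment ν k t w) / (2 * t ^ 2)) t := by
  obtain ⟨C, hC⟩ := exists_abs_noiseWeight_le (k + 2) (t := 2 * t) (by positivity)
  obtain ⟨D, hD⟩ := exists_abs_noiseWeight_le k (t := 2 * t) (by positivity)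
  have hi := fun j => integrable_noiseWeight_sub (ν := ν) j ht w
  have hint := ((hi (k + 2)).sub ((hi k).const_mul t)).div_const (2 * t ^ 2)
  refine (hasDerivAt_integral_of_dominated_loc_of_deriv_le (μ := ν)
    (F := fun t x => noiseWeight k t (w - x))
    (bound := fun _ => (2 * C + 2 * t * (2 * D)) / (2 * (t / 2) ^ 2))
    (Ioo_mem_nhds (half_lt_self ht) (lt_two_mul_self ht))
    (.of_forall fun t => aestronglyMeasurable_noiseWeight_sub k t w) (hi k)
    (F' := fun t x => (noiseWeight (k + 2) t (w - x) - t * noiseWeight k t (w - x)) / (2 * t ^ 2))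
    hint.aestronglyMeasurable (ae_of_all _ fun x s ⟨hs, hst⟩ => ?_) (integrable_const _)
    (ae_of_all _ fun x s ⟨hs, _⟩ => hasDerivAt_noiseWeight_variance k
      ((half_pos ht).trans hs) _)).2.congr_deriv ?_
  · have hs0 : 0 < s := (half_pos ht).trans hs
    have hle := fun j => abs_noiseWeight_le_two_mul j hs0 hst.le (by linarith) (w - x)
    have hCx := hC (w - x)
    have hDx := hD (w - x)
    rw [norm_div, norm_of_nonneg (by positivity : 0 ≤ 2 * s ^ 2)]
    gcongr
    · linarith [abs_nonneg (noiseWeight (k + 2) (2 * t) (w - x)),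
        mul_nonneg ht.le ((abs_nonneg _).trans hDx)]
    · refine (norm_sub_le _ _).trans (add_le_add ((hle _).trans (by linarith)) ?_)
      rw [norm_mul, norm_of_nonneg hs0.le]
      gcongr
      exact (hle k).trans (by linarith)
  · rw [integral_div, integral_sub (hi _) ((hi _).const_mul _), integral_const_mul]
    rfl

lemma smoothedAbsMoment_mul_le (j k : ℕ) (ht : 0 < t) (w : ℝ) :
    smoothedAbsMoment ν j t w * smoothedAbsMoment ν k t w
      ≤ obsDensity ν t w * smoothedAbsMoment ν (j + k) t w := by
  let ρ : ℝ → ℝ := fun x => gaussianPDFReal 0 t.toNNReal (w - x)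
  let d : ℝ → ℝ := fun x => |w - x|
  have habs : ∀ i, (fun x => |noiseWeight i t (w - x)|) = ρ * d ^ i := fun i => by
    ext x
    simp [noiseWeight, ρ, d, abs_mul, abs_of_nonneg (gaussianPDFReal_nonneg _ _ _), mul_comm]
  have hint : ∀ i, Integrable (ρ * d ^ i) ν := fun i => by
    rw [← habs]
    exact (integrable_noiseWeight_sub i ht w).abs
  have hd : 0 ≤ d := fun x => abs_nonneg _
  have hmono : Monovary (d ^ j) (d ^ k) := ((monovary_self d).pow_left₀ hd j).pow_right₀ hd k
  have h := integral_mul_integral_le_of_monovary (fun x => gaussianPDFReal_nonneg _ _ _) hmono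
    (by simpa using hint 0) (hint j) (hint k) (by simpa [mul_assoc, ← pow_add] using hint (j + k))
  rw [mul_assoc, ← pow_add] at h
  simpa only [← smoothedAbsMoment_zero, smoothedAbsMoment, habs, pow_zero, mul_one] using h

lemma smoothedAbsMoment_le_two_mul (k : ℕ) {s T : ℝ} (hs : 0 < s) (hsT : s ≤ T) (hTs : T ≤ 4 * s)
    (w : ℝ) : smoothedAbsMoment ν k s w ≤ 2 * smoothedAbsMoment ν k T w := by
  have hi := fun {r : ℝ} (hr : 0 < r) => (integrable_noiseWeight_sub (ν := ν) k hr w).abs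
  rw [smoothedAbsMoment, smoothedAbsMoment, ← integral_const_mul]
  exact integral_mono (hi hs) ((hi (hs.trans_le hsT)).const_mul 2) fun x =>
    abs_noiseWeight_le_two_mul k hs hsT hTs (w - x)

lemma integrable_smoothedMoment (k : ℕ) (ht : 0 < t) : Integrable (smoothedMoment ν k t) := by
  unfold smoothedMoment
  simpa using ((integrable_const (1 : ℝ)).convolution_integrand (ν := ν)
    (.lsmul ℝ ℝ) (integrable_noiseWeight k ht)).integral_prod_left

lemma integrable_smoothedAbsMoment (k : ℕ) (ht : 0 < t) :
    Integrable (smoothedAbsMoment ν k t) := by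
  unfold smoothedAbsMoment
  simpa using ((integrable_const (1 : ℝ)).convolution_integrand (ν := ν)
    (.lsmul ℝ ℝ) (integrable_noiseWeight k ht).abs).integral_prod_left

lemma integral_smoothedMoment (k : ℕ) (ht : 0 < t) :
    ∫ w, smoothedMoment ν k t w = ν.real Set.univ * ∫ u, noiseWeight k t u := by
  simpa [smoothedMoment, convolution] using integral_convolution (.lsmul ℝ ℝ)
    (integrable_const (1 : ℝ) (μ := ν)) (integrable_noiseWeight k ht)

end SmoothedMoment

/-! ### Conditional moments of the noise -/

/-- The conditional moment `E[U ^ k | X + U = w]` for independent `X ~ ν` and `U ~ N(0, t)`. -/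
def posteriorMoment (ν : Measure ℝ) (k : ℕ) (t w : ℝ) : ℝ :=
  smoothedMoment ν k t w / obsDensity ν t w

/-- The conditional variance `Var(U | X + U = w)` for independent `X ~ ν` and `U ~ N(0, t)`. -/
def posteriorVariance (ν : Measure ℝ) (t w : ℝ) : ℝ :=
  posteriorMoment ν 2 t w - posteriorMoment ν 1 t w ^ 2

section PosteriorMoment

variable {ν : Measure ℝ} [IsFiniteMeasure ν] [NeZero ν] {t : ℝ}

lemma posteriorMoment_mul_obsDensity (k : ℕ) (ht : 0 < t) (w : ℝ) :
    posteriorMoment ν k t w * obsDensity ν t w = smoothedMoment ν k t w :=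
  div_mul_cancel₀ _ (obsDensity_pos ht w).ne'

lemma posteriorMoment_zero (ht : 0 < t) (w : ℝ) : posteriorMoment ν 0 t w = 1 :=
  div_self (obsDensity_pos ht w).ne'

lemma continuous_posteriorMoment (k : ℕ) (ht : 0 < t) : Continuous (posteriorMoment ν k t) :=
  (continuous_smoothedMoment k ht).div (continuous_smoothedMoment 0 ht)
    fun w => (obsDensity_pos ht w).ne'

lemma continuous_posteriorVariance (ht : 0 < t) : Continuous (posteriorVariance ν t) :=
  (continuous_posteriorMoment 2 ht).sub ((continuous_posteriorMoment 1 ht).pow 2)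

lemma hasDerivAt_obsDensity (ht : 0 < t) (w : ℝ) :
    HasDerivAt (obsDensity ν t) (-(posteriorMoment ν 1 t w * obsDensity ν t w / t)) w := by
  simpa [posteriorMoment_mul_obsDensity 1 ht w] using hasDerivAt_smoothedMoment (ν := ν) 0 ht w

lemma hasDerivAt_obsDensity_variance (ht : 0 < t) (w : ℝ) :
    HasDerivAt (fun t => obsDensity ν t w)
      ((posteriorMoment ν 2 t w - t) / (2 * t ^ 2) * obsDensity ν t w) t := by
  refine (hasDerivAt_smoothedMoment_variance 0 ht w).congr_deriv ?_
  rw [← posteriorMoment_mul_obsDensity (0 + 2) ht w]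
  ring

lemma hasDerivAt_posteriorMoment (k : ℕ) (ht : 0 < t) (w : ℝ) :
    HasDerivAt (posteriorMoment ν k t)
      (k * posteriorMoment ν (k - 1) t w
        - (posteriorMoment ν (k + 1) t w - posteriorMoment ν 1 t w * posteriorMoment ν k t w) / t)
      w := by
  have hp := (obsDensity_pos (ν := ν) ht w).ne'
  refine ((hasDerivAt_smoothedMoment k ht w).div (hasDerivAt_obsDensity ht w) hp).congr_deriv ?_
  rw [← posteriorMoment_mul_obsDensity (k - 1) ht w, ← posteriorMoment_mul_obsDensity (k + 1) ht w,
    ← posteriorMoment_mul_obsDensity k ht w]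
  field_simp
  ring

lemma hasDerivAt_posteriorMoment_one (ht : 0 < t) (w : ℝ) :
    HasDerivAt (posteriorMoment ν 1 t) (1 - posteriorVariance ν t w / t) w := by
  refine (hasDerivAt_posteriorMoment 1 ht w).congr_deriv ?_
  simp only [posteriorMoment_zero ht, posteriorVariance, Nat.cast_one]
  ring

lemma hasDerivAt_posteriorMoment_variance (k : ℕ) (ht : 0 < t) (w : ℝ) :
    HasDerivAt (fun t => posteriorMoment ν k t w)
      ((posteriorMoment ν (k + 2) t w - posteriorMoment ν 2 t w * posteriorMoment ν k t w)
        / (2 * t ^ 2)) t := by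
  have hp := (obsDensity_pos (ν := ν) ht w).ne'
  refine ((hasDerivAt_smoothedMoment_variance k ht w).div
    (hasDerivAt_obsDensity_variance ht w) hp).congr_deriv ?_
  rw [← posteriorMoment_mul_obsDensity (k + 2) ht w, ← posteriorMoment_mul_obsDensity k ht w]
  field_simp
  ring

lemma abs_prod_posteriorMoment_mul_obsDensity_le (ht : 0 < t) (w : ℝ) (l : List ℕ) :
    |(l.map fun k => posteriorMoment ν k t w).prod * obsDensity ν t w|
      ≤ smoothedAbsMoment ν l.sum t w := by
  have hp := obsDensity_pos (ν := ν) ht w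
  induction l with
  | nil => simp [smoothedAbsMoment_zero, abs_of_pos hp]
  | cons k l ih =>
    refine le_of_mul_le_mul_left ?_ hp
    rw [List.map_cons, List.prod_cons, List.sum_cons]
    calc obsDensity ν t w * |posteriorMoment ν k t w * (l.map _).prod * obsDensity ν t w|
        = |smoothedMoment ν k t w| * |(l.map _).prod * obsDensity ν t w| := by
          rw [← posteriorMoment_mul_obsDensity k ht w]
          simp only [abs_mul, abs_of_pos hp]
          ring
      _ ≤ smoothedAbsMoment ν k t w * smoothedAbsMoment ν l.sum t w :=
          mul_le_mul (abs_smoothedMoment_le k t w) ih (abs_nonneg _)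
            ((abs_nonneg _).trans (abs_smoothedMoment_le k t w))
      _ ≤ obsDensity ν t w * smoothedAbsMoment ν (k + l.sum) t w :=
          smoothedAbsMoment_mul_le k l.sum ht w

lemma integrable_prod_posteriorMoment_mul_obsDensity (ht : 0 < t) (l : List ℕ) :
    Integrable fun w => (l.map fun k => posteriorMoment ν k t w).prod * obsDensity ν t w := by
  have hcont : Continuous fun w => (l.map fun k => posteriorMoment ν k t w).prod :=
    continuous_list_prod l fun k _ => continuous_posteriorMoment k ht
  exact (integrable_smoothedAbsMoment l.sum ht).mono'
    (hcont.mul (continuous_smoothedMoment 0 ht)).aestronglyMeasurable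
    (ae_of_all _ fun w => abs_prod_posteriorMoment_mul_obsDensity_le ht w l)

lemma integrable_posteriorVariance_sq_mul_obsDensity (ht : 0 < t) :
    Integrable fun w => posteriorVariance ν t w ^ 2 * obsDensity ν t w := by
  have hi := integrable_prod_posteriorMoment_mul_obsDensity (ν := ν) ht
  refine (((hi [2, 2]).sub ((hi [1, 1, 2]).const_mul 2)).add (hi [1, 1, 1, 1])).congr
    (ae_of_all _ fun w => ?_)
  simp only [posteriorVariance, Pi.add_apply, Pi.sub_apply, List.map_cons, List.map_nil,
    List.prod_cons, List.prod_nil]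
  ring

/-- The value of `2t² ∂ₜ (m₁² p) / p`, where `mₖ = posteriorMoment ν k` and `p = obsDensity ν`. -/
def sqMeanRate (ν : Measure ℝ) (t w : ℝ) : ℝ :=
  2 * (posteriorMoment ν 1 t w * posteriorMoment ν 3 t w)
    - posteriorMoment ν 1 t w ^ 2 * posteriorMoment ν 2 t w - t * posteriorMoment ν 1 t w ^ 2

lemma hasDerivAt_posteriorMoment_one_sq_mul_obsDensity_variance (ht : 0 < t) (w : ℝ) :
    HasDerivAt (fun t => posteriorMoment ν 1 t w ^ 2 * obsDensity ν t w)
      (sqMeanRate ν t w * obsDensity ν t w / (2 * t ^ 2)) t := by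
  refine (((hasDerivAt_posteriorMoment_variance 1 ht w).pow 2).mul
    (hasDerivAt_obsDensity_variance ht w)).congr_deriv ?_
  simp only [sqMeanRate, Nat.reduceAdd, Pi.pow_apply]
  field_simp
  ring

lemma integrable_sqMeanRate_mul_obsDensity (ht : 0 < t) :
    Integrable fun w => sqMeanRate ν t w * obsDensity ν t w := by
  have hi := integrable_prod_posteriorMoment_mul_obsDensity (ν := ν) ht
  refine ((((hi [1, 3]).const_mul 2).sub (hi [1, 1, 2])).sub ((hi [1, 1]).const_mul t)).congr
    (ae_of_all _ fun w => ?_)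
  simp only [sqMeanRate, Pi.sub_apply, List.map_cons, List.map_nil, List.prod_cons, List.prod_nil]
  ring

lemma abs_sqMeanRate_mul_obsDensity_le (ht : 0 < t) (w : ℝ) :
    |sqMeanRate ν t w * obsDensity ν t w|
      ≤ 3 * smoothedAbsMoment ν 4 t w + t * smoothedAbsMoment ν 2 t w := by
  have hle := abs_prod_posteriorMoment_mul_obsDensity_le (ν := ν) ht w
  have h13 := hle [1, 3]
  have h112 := hle [1, 1, 2]
  have h11 := mul_le_mul_of_nonneg_left (hle [1, 1]) ht.le
  simp only [List.map_cons, List.map_nil, List.prod_cons, List.prod_nil, List.sum_cons,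
    List.sum_nil, Nat.reduceAdd, mul_one] at h13 h112 h11
  rw [← abs_of_pos ht, ← abs_mul, abs_of_pos ht] at h11
  rw [abs_le] at *
  constructor <;> simp only [sqMeanRate] <;> linarith

lemma hasDerivAt_integral_posteriorMoment_one_sq_mul_obsDensity (ht : 0 < t) :
    HasDerivAt (fun t => ∫ w, posteriorMoment ν 1 t w ^ 2 * obsDensity ν t w)
      ((∫ w, sqMeanRate ν t w * obsDensity ν t w) / (2 * t ^ 2)) t := by
  have hi : ∀ {s}, 0 < s → Integrable fun w => posteriorMoment ν 1 s w ^ 2 * obsDensity ν s w :=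
    fun hs => by simpa [sq] using integrable_prod_posteriorMoment_mul_obsDensity (ν := ν) hs [1, 1]
  have hA := fun k => integrable_smoothedAbsMoment (ν := ν) (t := 2 * t) k (by positivity)
  refine (hasDerivAt_integral_of_dominated_loc_of_deriv_le
    (bound := fun w => (3 * (2 * smoothedAbsMoment ν 4 (2 * t) w)
      + 2 * t * (2 * smoothedAbsMoment ν 2 (2 * t) w)) / (2 * (t / 2) ^ 2))
    (F' := fun t w => sqMeanRate ν t w * obsDensity ν t w / (2 * t ^ 2))
    (Ioo_mem_nhds (half_lt_self ht) (lt_two_mul_self ht))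
    ((lt_mem_nhds ht).mono fun s hs => (hi hs).aestronglyMeasurable) (hi ht)
    ((integrable_sqMeanRate_mul_obsDensity ht).div_const _).aestronglyMeasurable
    (ae_of_all _ fun w s ⟨hs, hst⟩ => ?_)
    (((((hA 4).const_mul 2).const_mul 3).add (((hA 2).const_mul 2).const_mul (2 * t))).div_const _)
    (ae_of_all _ fun w s ⟨hs, _⟩ => hasDerivAt_posteriorMoment_one_sq_mul_obsDensity_variance
      ((half_pos ht).trans hs) w)).2.congr_deriv (integral_div _ _)
  have hs0 : 0 < s := (half_pos ht).trans hs
  have hAs := fun k => smoothedAbsMoment_le_two_mul (ν := ν) k hs0 hst.le (by linarith) w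
  have hA0 : ∀ k s, 0 ≤ smoothedAbsMoment ν k s w := fun k s =>
    integral_nonneg fun _ => abs_nonneg _
  rw [norm_div, norm_of_nonneg (by positivity : 0 ≤ 2 * s ^ 2), norm_eq_abs]
  have h4 := hA0 4 (2 * t)
  have h2 := hA0 2 s
  gcongr
  · linarith [mul_nonneg ht.le (hA0 2 (2 * t))]
  · refine (abs_sqMeanRate_mul_obsDensity_le hs0 w).trans ?_
    gcongr
    exacts [hAs 4, hAs 2]

/-- A primitive in `w` of `2t m₂ p - sqMeanRate · p - 2 v² p`, where `v` is the posterior variance: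
since it is integrable, the integral of that combination vanishes. -/
def rateFlux (ν : Measure ℝ) (t w : ℝ) : ℝ :=
  t * ((2 * (posteriorMoment ν 1 t w * posteriorMoment ν 2 t w) - posteriorMoment ν 1 t w ^ 3)
    * obsDensity ν t w)

lemma hasDerivAt_rateFlux (ht : 0 < t) (w : ℝ) :
    HasDerivAt (rateFlux ν t)
      (2 * t * smoothedMoment ν 2 t w - sqMeanRate ν t w * obsDensity ν t w
        - 2 * (posteriorVariance ν t w ^ 2 * obsDensity ν t w)) w := by
  have h₁ := hasDerivAt_posteriorMoment_one (ν := ν) ht w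
  refine (((((h₁.mul (hasDerivAt_posteriorMoment 2 ht w)).const_mul 2).sub (h₁.pow 3)).mul
    (hasDerivAt_obsDensity ht w)).const_mul t).congr_deriv ?_
  rw [← posteriorMoment_mul_obsDensity 2 ht w]
  simp only [sqMeanRate, posteriorVariance, Pi.mul_apply, Pi.pow_apply, Pi.sub_apply,
    Nat.reduceAdd, Nat.reduceSub, Nat.cast_ofNat]
  field_simp
  ring

lemma integrable_rateFlux (ht : 0 < t) : Integrable (rateFlux ν t) := by
  have hi := integrable_prod_posteriorMoment_mul_obsDensity (ν := ν) ht
  refine ((((hi [1, 2]).const_mul 2).sub (hi [1, 1, 1])).const_mul t).congr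
    (ae_of_all _ fun w => ?_)
  simp only [rateFlux, Pi.sub_apply, List.map_cons, List.map_nil, List.prod_cons, List.prod_nil]
  ring

lemma integral_sqMeanRate_mul_obsDensity (ht : 0 < t) :
    ∫ w, sqMeanRate ν t w * obsDensity ν t w
      = 2 * t * (∫ w, smoothedMoment ν 2 t w)
        - 2 * ∫ w, posteriorVariance ν t w ^ 2 * obsDensity ν t w := by
  have hM := (integrable_smoothedMoment (ν := ν) 2 ht).const_mul (2 * t)
  have hS := integrable_sqMeanRate_mul_obsDensity (ν := ν) ht
  have hV := (integrable_posteriorVariance_sq_mul_obsDensity (ν := ν) ht).const_mul 2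
  have hMS : Integrable fun w =>
    2 * t * smoothedMoment ν 2 t w - sqMeanRate ν t w * obsDensity ν t w := hM.sub hS
  have hzero := integral_eq_zero_of_hasDerivAt_of_integrable (hasDerivAt_rateFlux ht)
    (hMS.sub hV) (integrable_rateFlux ht)
  rw [integral_sub hMS hV, integral_sub hM hS, integral_const_mul, integral_const_mul] at hzero
  linarith

lemma integral_posteriorVariance_mul_obsDensity (ht : 0 < t) :
    ∫ w, posteriorVariance ν t w * obsDensity ν t w
      = (∫ w, smoothedMoment ν 2 t w)
        - ∫ w, posteriorMoment ν 1 t w ^ 2 * obsDensity ν t w := by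
  have hsq : Integrable fun w => posteriorMoment ν 1 t w ^ 2 * obsDensity ν t w := by
    simpa [sq] using integrable_prod_posteriorMoment_mul_obsDensity (ν := ν) ht [1, 1]
  rw [← integral_sub (integrable_smoothedMoment 2 ht) hsq]
  simp only [posteriorVariance, sub_mul, posteriorMoment_mul_obsDensity 2 ht]

end PosteriorMoment

lemma hasDerivAt_integral_posteriorVariance_mul_obsDensity {ν : Measure ℝ}
    [IsProbabilityMeasure ν] {t : ℝ} (ht : 0 < t) :
    HasDerivAt (fun t => ∫ w, posteriorVariance ν t w * obsDensity ν t w)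
      ((∫ w, posteriorVariance ν t w ^ 2 * obsDensity ν t w) / t ^ 2) t := by
  have hM : ∀ {s}, 0 < s → ∫ w, smoothedMoment ν 2 s w = s := fun hs => by
    rw [integral_smoothedMoment 2 hs, integral_noiseWeight_two hs, probReal_univ, one_mul]
  refine (((hasDerivAt_id t).sub (hasDerivAt_integral_posteriorMoment_one_sq_mul_obsDensity
    (ν := ν) ht)).congr_deriv ?_).congr_of_eventuallyEq ?_
  · rw [integral_sqMeanRate_mul_obsDensity ht, hM ht]
    field_simp
    ring
  · filter_upwards [lt_mem_nhds ht] with s hs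
    rw [integral_posteriorVariance_mul_obsDensity hs, hM hs]
    rfl

/-! ### The Bayes formula for densities -/

section Density

variable {Ω E : Type*} [MeasurableSpace Ω] [MeasurableSpace E] {μ : Measure Ω} {η : Measure E}
  {V : Ω → E} {f h : E → ℝ}

lemma integrable_comp_iff_of_map_eq_withDensity (hV : AEMeasurable V μ) (hf : Measurable f)
    (hf0 : 0 ≤ f) (hlaw : μ.map V = η.withDensity fun y => ENNReal.ofReal (f y))
    (hh : Measurable h) :
    Integrable (fun ω => h (V ω)) μ ↔ Integrable (fun y => f y * h y) η := by
  have hmap := integrable_map_measure (g := h) hh.aestronglyMeasurable hV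
  rw [hlaw, integrable_withDensity_iff_integrable_smul' (by fun_prop) (by simp)] at hmap
  simpa [ENNReal.toReal_ofReal (hf0 _), Function.comp_def] using hmap.symm

lemma integrable_of_map_eq_withDensity [IsFiniteMeasure μ] (hV : AEMeasurable V μ)
    (hf : Measurable f) (hf0 : 0 ≤ f)
    (hlaw : μ.map V = η.withDensity fun y => ENNReal.ofReal (f y)) : Integrable f η := by
  simpa using (integrable_comp_iff_of_map_eq_withDensity hV hf hf0 hlaw
    (h := fun _ => 1) measurable_const).1 (integrable_const 1)

lemma setIntegral_comp_of_map_eq_withDensity (hV : AEMeasurable V μ) (hf : Measurable f)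
    (hf0 : 0 ≤ f) (hlaw : μ.map V = η.withDensity fun y => ENNReal.ofReal (f y))
    (hh : Measurable h) {B : Set E} (hB : MeasurableSet B) :
    ∫ ω in V ⁻¹' B, h (V ω) ∂μ = ∫ y in B, f y * h y ∂η := by
  rw [← setIntegral_map hB hh.aestronglyMeasurable hV, hlaw,
    setIntegral_withDensity_eq_setIntegral_toReal_smul (by fun_prop) (by simp) _ hB]
  simp [ENNReal.toReal_ofReal (hf0 _)]

end Density

section Bayes

variable {Ω A B : Type*} [MeasurableSpace Ω] [MeasurableSpace A] [MeasurableSpace B]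
  {μ : Measure Ω} [IsFiniteMeasure μ] {ν : Measure A} {η : Measure B} [SFinite ν] [SFinite η]
  {X : Ω → A} {W : Ω → B} {f : A × B → ℝ}

lemma integral_mul_integral_mul_div_ae_eq (hf : Integrable f (ν.prod η)) (hf0 : 0 ≤ f)
    (g : A × B → ℝ) :
    (fun y => (∫ x, f (x, y) ∂ν) * ((∫ x, f (x, y) * g (x, y) ∂ν) / ∫ x, f (x, y) ∂ν))
      =ᵐ[η] fun y => ∫ x, f (x, y) * g (x, y) ∂ν := by
  filter_upwards [hf.prod_left_ae] with y hy
  refine mul_div_cancel_of_imp' fun hFy => ?_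
  have hzero := (integral_eq_zero_iff_of_nonneg (fun x => hf0 (x, y)) hy).1 hFy
  exact integral_eq_zero_of_ae (hzero.mono fun x hx => by simp_all)

lemma map_eq_withDensity_integral (hX : AEMeasurable X μ) (hW : AEMeasurable W μ)
    (hf : Measurable f) (hf0 : 0 ≤ f)
    (hlaw : μ.map (fun ω => (X ω, W ω)) = (ν.prod η).withDensity fun p => ENNReal.ofReal (f p)) :
    μ.map W = η.withDensity fun y => ENNReal.ofReal (∫ x, f (x, y) ∂ν) := by
  have hsnd : μ.map W = (μ.map fun ω => (X ω, W ω)).map Prod.snd :=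
    (AEMeasurable.map_map_of_aemeasurable measurable_snd.aemeasurable (hX.prodMk hW)).symm
  have hF : Measurable fun y => ∫ x, f (x, y) ∂ν :=
    hf.stronglyMeasurable.integral_prod_left'.measurable
  rw [hsnd, hlaw]
  refine Measure.ext_of_lintegral _ fun g hg => ?_
  rw [lintegral_map hg measurable_snd, lintegral_withDensity_eq_lintegral_mul _ (by fun_prop)
    (by fun_prop), lintegral_withDensity_eq_lintegral_mul _ (by fun_prop) hg,
    lintegral_prod_symm' _ (by fun_prop)]
  refine lintegral_congr_ae ?_
  have hf_int := integrable_of_map_eq_withDensity (hX.prodMk hW) hf hf0 hlaw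
  filter_upwards [hf_int.prod_left_ae] with y hy
  simp only [Pi.mul_apply]
  rw [lintegral_mul_const _ (by fun_prop),
    ofReal_integral_eq_lintegral_ofReal hy (ae_of_all _ fun x => hf0 (x, y))]

lemma condExp_comp_prodMk_ae_eq_integral_div (hX : AEMeasurable X μ) (hW : Measurable W)
    (hf : Measurable f) (hf0 : 0 ≤ f)
    (hlaw : μ.map (fun ω => (X ω, W ω)) = (ν.prod η).withDensity fun p => ENNReal.ofReal (f p))
    {g : A × B → ℝ} (hg : Measurable g) (hint : Integrable (fun ω => g (X ω, W ω)) μ) :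
    μ[fun ω => g (X ω, W ω) | MeasurableSpace.comap W inferInstance] =ᵐ[μ] fun ω =>
      (∫ x, f (x, W ω) * g (x, W ω) ∂ν) / ∫ x, f (x, W ω) ∂ν := by
  have hXW := hX.prodMk hW.aemeasurable
  let F : B → ℝ := fun y => ∫ x, f (x, y) ∂ν
  let N : B → ℝ := fun y => ∫ x, f (x, y) * g (x, y) ∂ν
  have hF : Measurable F := hf.stronglyMeasurable.integral_prod_left'.measurable
  have hN : Measurable N := (hf.mul hg).stronglyMeasurable.integral_prod_left'.measurable
  have hF0 : 0 ≤ F := fun y => integral_nonneg fun x => hf0 (x, y)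
  have hWlaw : μ.map W = η.withDensity fun y => ENNReal.ofReal (F y) :=
    map_eq_withDensity_integral hX hW.aemeasurable hf hf0 hlaw
  have hfg : Integrable (fun p => f p * g p) (ν.prod η) :=
    (integrable_comp_iff_of_map_eq_withDensity hXW hf hf0 hlaw hg).1 hint
  have hcancel : (fun y => F y * (N y / F y)) =ᵐ[η] N :=
    integral_mul_integral_mul_div_ae_eq (integrable_of_map_eq_withDensity hXW hf hf0 hlaw) hf0 g
  have hr : Measurable fun y => N y / F y := hN.div hF
  have hr_int : Integrable (fun ω => N (W ω) / F (W ω)) μ :=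
    (integrable_comp_iff_of_map_eq_withDensity hW.aemeasurable hF hF0 hWlaw hr).2
      (hfg.integral_prod_right.congr hcancel.symm)
  refine (ae_eq_condExp_of_forall_setIntegral_eq hW.comap_le hint
    (fun s _ _ => hr_int.integrableOn) ?_
    (hr.comp (comap_measurable W)).stronglyMeasurable.aestronglyMeasurable).symm
  rintro _ ⟨S, hS, rfl⟩ -
  have hpre : W ⁻¹' S = (fun ω => (X ω, W ω)) ⁻¹' (Set.univ ×ˢ S) := by ext; simp
  calc ∫ ω in W ⁻¹' S, N (W ω) / F (W ω) ∂μ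
      = ∫ y in S, F y * (N y / F y) ∂η :=
        setIntegral_comp_of_map_eq_withDensity hW.aemeasurable hF hF0 hWlaw hr hS
    _ = ∫ y in S, N y ∂η := integral_congr_ae (ae_restrict_of_ae hcancel)
    _ = ∫ p in Set.univ ×ˢ S, f p * g p ∂ν.prod η := by
        have hfg_S := hfg.integrableOn (s := Set.univ ×ˢ S)
        rw [IntegrableOn, ← Measure.prod_restrict, Measure.restrict_univ] at hfg_S
        rw [← Measure.prod_restrict, Measure.restrict_univ, integral_prod_symm _ hfg_S]
    _ = ∫ ω in W ⁻¹' S, g (X ω, W ω) ∂μ := by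
        rw [hpre, setIntegral_comp_of_map_eq_withDensity hXW hf hf0 hlaw hg (.prod .univ hS)]

end Bayes

lemma map_prodMk_add_eq_withDensity {Ω G : Type*} [MeasurableSpace Ω] [MeasurableSpace G]
    [AddGroup G] [MeasurableAdd₂ G] [MeasurableNeg G] {μ : Measure Ω} [IsFiniteMeasure μ]
    {η : Measure G} [SFinite η] [η.IsAddLeftInvariant] {X U : Ω → G} (hX : AEMeasurable X μ)
    (hU : AEMeasurable U μ) (hindep : IndepFun X U μ) {q : G → ℝ≥0∞} (hq : Measurable q)
    (hlaw : μ.map U = η.withDensity q) :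
    μ.map (fun ω => (X ω, X ω + U ω))
      = ((μ.map X).prod η).withDensity fun p => q (-p.1 + p.2) := by
  have hshear : Measurable fun p : G × G => (p.1, p.1 + p.2) := by fun_prop
  have hmap : μ.map (fun ω => (X ω, X ω + U ω))
      = (μ.map fun ω => (X ω, U ω)).map fun p : G × G => (p.1, p.1 + p.2) :=
    (AEMeasurable.map_map_of_aemeasurable hshear.aemeasurable (hX.prodMk hU)).symm
  rw [hmap, (indepFun_iff_map_prod_eq_prod_map_map hX hU).1 hindep, hlaw, prod_withDensity_right hq]
  refine Measure.ext_of_lintegral _ fun g hg => ?_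
  rw [lintegral_map hg hshear, lintegral_withDensity_eq_lintegral_mul _ (by fun_prop)
    (by fun_prop), lintegral_withDensity_eq_lintegral_mul _ (by fun_prop) hg]
  refine Eq.trans ?_ ((measurePreserving_prod_add (μ.map X) η).lintegral_comp (by fun_prop))
  simp

lemma integrable_pow_of_map_eq_gaussianReal {Ω : Type*} [MeasurableSpace Ω] {μ : Measure Ω}
    {U : Ω → ℝ} (hU : AEMeasurable U μ) {m : ℝ} {v : NNReal}
    (hUlaw : μ.map U = gaussianReal m v) (k : ℕ) :
    Integrable (fun ω => U ω ^ k) μ := by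
  have h := (memLp_id_gaussianReal (μ := m) (v := v) k).integrable_norm_pow'
  rw [← hUlaw, integrable_map_measure (by fun_prop) hU] at h
  exact h.mono (by fun_prop) (ae_of_all _ fun ω => by simp)

section NoisyObservation

variable {Ω : Type*} [MeasurableSpace Ω] {μ : Measure Ω} [IsFiniteMeasure μ]
  {X U : Ω → ℝ} {t : ℝ}

lemma map_prodMk_add_noise (ht : 0 < t) (hX : AEMeasurable X μ) (hU : AEMeasurable U μ)
    (hUlaw : μ.map U = gaussianReal 0 t.toNNReal) (hindep : IndepFun X U μ) :
    μ.map (fun ω => (X ω, X ω + U ω)) =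
      ((μ.map X).prod volume).withDensity fun p =>
        ENNReal.ofReal (noiseWeight 0 t (p.2 - p.1)) := by
  rw [gaussianReal_of_var_ne_zero _ (by simpa using ht)] at hUlaw
  simpa only [gaussianPDF, neg_add_eq_sub, noiseWeight_zero] using
    map_prodMk_add_eq_withDensity hX hU hindep (measurable_gaussianPDF 0 t.toNNReal) hUlaw

lemma integral_comp_add_noise (ht : 0 < t) (hX : AEMeasurable X μ) (hU : AEMeasurable U μ)
    (hUlaw : μ.map U = gaussianReal 0 t.toNNReal) (hindep : IndepFun X U μ) {h : ℝ → ℝ}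
    (hh : Measurable h) :
    ∫ ω, h (X ω + U ω) ∂μ = ∫ w, h w * obsDensity (μ.map X) t w := by
  have hlaw := map_eq_withDensity_integral hX (hX.add hU) (measurable_noiseWeight_sub 0 t)
    (fun _ => noiseWeight_zero_nonneg t _) (map_prodMk_add_noise ht hX hU hUlaw hindep)
  have hdensity : Measurable (obsDensity (μ.map X) t) :=
    (continuous_smoothedMoment 0 ht).measurable
  simpa [mul_comm] using setIntegral_comp_of_map_eq_withDensity (hX.add hU) hdensity
    (fun w => integral_nonneg fun x => noiseWeight_zero_nonneg t _) hlaw hh .univ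

lemma condExp_noise_pow_ae_eq (ht : 0 < t) (hX : Measurable X) (hU : Measurable U)
    (hUlaw : μ.map U = gaussianReal 0 t.toNNReal) (hindep : IndepFun X U μ) (k : ℕ) :
    μ[fun ω => U ω ^ k | MeasurableSpace.comap (fun ω => X ω + U ω) inferInstance] =ᵐ[μ]
      fun ω => posteriorMoment (μ.map X) k t (X ω + U ω) := by
  have h := condExp_comp_prodMk_ae_eq_integral_div hX.aemeasurable (hX.add hU)
    (measurable_noiseWeight_sub 0 t) (fun _ => noiseWeight_zero_nonneg t _)
    (map_prodMk_add_noise ht hX.aemeasurable hU.aemeasurable hUlaw hindep)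
    (g := fun p => (p.2 - p.1) ^ k) (by fun_prop)
    (by simpa using integrable_pow_of_map_eq_gaussianReal hU.aemeasurable hUlaw k)
  simpa [posteriorMoment, smoothedMoment, noiseWeight, mul_comm, Pi.add_def] using h

end NoisyObservation

/-! ### Conditional variance -/

section ConditionalVariance

variable {Ω : Type*} {m : MeasurableSpace Ω} [m₀ : MeasurableSpace Ω] {μ : Measure Ω}
  [IsFiniteMeasure μ] {X U : Ω → ℝ}

lemma condVarS_ae_eq_condVar (hm : m ≤ m₀) (hX : MemLp X 2 μ) :
    condVarS m μ X =ᵐ[μ] Var[X; μ | m] :=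
  (condVar_ae_eq_condExp_sq_sub_sq_condExp hm hX).symm

lemma condVar_ae_eq_of_stronglyMeasurable_add (hm : m ≤ m₀) (hX : Integrable X μ)
    (hU : Integrable U μ) (hXU : StronglyMeasurable[m] (X + U)) :
    Var[X; μ | m] =ᵐ[μ] Var[U; μ | m] := by
  have hadd := condExp_add hX hU m
  rw [condExp_of_stronglyMeasurable hm hXU (hX.add hU)] at hadd
  refine condExp_congr_ae ?_
  filter_upwards [hadd] with ω hω
  simp only [Pi.add_apply, Pi.pow_apply, Pi.sub_apply] at hω ⊢
  have herror : X ω - (μ[X | m]) ω = -(U ω - (μ[U | m]) ω) := by linarith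
  rw [herror, neg_sq]

lemma condVarS_sq_ae_le (hm : m ≤ m₀) (hX : MemLp X 2 μ) (hX4 : Integrable (fun ω => X ω ^ 4) μ) :
    (fun ω => condVarS m μ X ω ^ 2) ≤ᵐ[μ] μ[fun ω => X ω ^ 4 | m] := by
  have hpow : (fun x : ℝ => x ^ 2) ∘ (fun ω => X ω ^ 2) = fun ω => X ω ^ 4 := by
    ext ω
    simp only [Function.comp_apply, ← pow_mul]
  have hjensen := (even_two.convexOn_pow (𝕜 := ℝ)).map_condExp_le_univ hm
    (continuous_pow 2).lowerSemicontinuous hX.integrable_sq (hpow ▸ hX4)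
  have hnonneg : 0 ≤ᵐ[μ] Var[X; μ | m] := condExp_nonneg (ae_of_all _ fun ω => sq_nonneg _)
  rw [hpow] at hjensen
  filter_upwards [hjensen, hnonneg, condVar_ae_le_condExp_sq hm hX, condVarS_ae_eq_condVar hm hX]
    with ω hjensen hnonneg hle heq
  rw [heq]
  exact (pow_le_pow_left₀ hnonneg hle 2).trans hjensen

lemma ofReal_integral_condVarS_sq_le (hm : m ≤ m₀) (hX : MemLp X 2 μ) :
    ENNReal.ofReal (∫ ω, condVarS m μ X ω ^ 2 ∂μ) ≤ ∫⁻ ω, ENNReal.ofReal (X ω ^ 4) ∂μ := by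
  have hX4_nonneg : 0 ≤ᵐ[μ] fun ω => X ω ^ 4 := ae_of_all _ fun ω => by positivity
  by_cases htop : ∫⁻ ω, ENNReal.ofReal (X ω ^ 4) ∂μ = ∞
  · simp [htop]
  have hX4 : Integrable (fun ω => X ω ^ 4) μ :=
    (lintegral_ofReal_ne_top_iff_integrable (hX.aestronglyMeasurable.pow 4) hX4_nonneg).1 htop
  rw [← ofReal_integral_eq_lintegral_ofReal hX4 hX4_nonneg,
    ← integral_condExp hm (f := fun ω => X ω ^ 4)]
  exact ENNReal.ofReal_le_ofReal (integral_mono_of_nonneg (ae_of_all _ fun ω => sq_nonneg _)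
    integrable_condExp (condVarS_sq_ae_le hm hX hX4))

end ConditionalVariance

/-! ### The Gaussian channel -/

lemma map_const_mul_inv_sqrt {Ω : Type*} [MeasurableSpace Ω] {μ : Measure Ω} {Z : Ω → ℝ}
    (hZ : Measurable Z) (hZlaw : μ.map Z = gaussianReal 0 1) {s : ℝ} (hs : 0 ≤ s) :
    μ.map (fun ω => (√s)⁻¹ * Z ω) = gaussianReal 0 (s⁻¹).toNNReal := by
  have hmap : μ.map (fun ω => (√s)⁻¹ * Z ω) = (μ.map Z).map fun z => (√s)⁻¹ * z :=
    (Measure.map_map (by fun_prop) hZ).symm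
  rw [hmap, hZlaw, gaussianReal_map_const_mul, mul_zero]
  congr 1
  ext
  simp [hs]

section Channel

variable {Ω : Type*} [MeasurableSpace Ω]

lemma obsSigmaS_eq_comap (X Z : Ω → ℝ) {s : ℝ} (hs : 0 < s) :
    obsSigmaS X Z s = MeasurableSpace.comap (fun ω => X ω + (√s)⁻¹ * Z ω) inferInstance := by
  have hs' : √s ≠ 0 := by positivity
  have hscale : obsS X Z s = (fun y => √s * y) ∘ fun ω => X ω + (√s)⁻¹ * Z ω := by
    ext ω
    simp only [obsS, Function.comp_apply]
    field_simp
  rw [obsSigmaS, hscale, ← MeasurableSpace.comap_comp]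
  congr 1
  exact (measurableEmbedding_mulLeft₀ hs').comap_eq

variable {μ : Measure Ω} {X Z : Ω → ℝ}

lemma obsSigmaS_le (hX : Measurable X) (hZ : Measurable Z) (s : ℝ) :
    obsSigmaS X Z s ≤ ‹MeasurableSpace Ω› :=
  Measurable.comap_le ((hX.const_mul _).add hZ)

lemma mmseS_eq_integral_condVarS [IsFiniteMeasure μ] (hX : Measurable X) (hZ : Measurable Z)
    (hX2 : MemLp X 2 μ) (s : ℝ) :
    mmseS μ X Z s = ∫ ω, condVarS (obsSigmaS X Z s) μ X ω ∂μ := by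
  rw [integral_congr_ae (condVarS_ae_eq_condVar (obsSigmaS_le hX hZ s) hX2), condVar,
    integral_condExp (obsSigmaS_le hX hZ s)]
  rfl

variable [IsProbabilityMeasure μ] {s : ℝ}

lemma condVarS_obsSigmaS_ae_eq (hX : Measurable X) (hZ : Measurable Z)
    (hZlaw : μ.map Z = gaussianReal 0 1) (hindep : IndepFun X Z μ) (hX2 : MemLp X 2 μ)
    (hs : 0 < s) :
    condVarS (obsSigmaS X Z s) μ X =ᵐ[μ] fun ω =>
      posteriorVariance (μ.map X) s⁻¹ (X ω + (√s)⁻¹ * Z ω) := by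
  have hm := obsSigmaS_le hX hZ s
  let U : Ω → ℝ := fun ω => (√s)⁻¹ * Z ω
  have hU : Measurable U := hZ.const_mul _
  have hUlaw : μ.map U = gaussianReal 0 (s⁻¹).toNNReal := map_const_mul_inv_sqrt hZ hZlaw hs.le
  have hU2 : MemLp U 2 μ := (memLp_two_iff_integrable_sq hU.aestronglyMeasurable).2
    (integrable_pow_of_map_eq_gaussianReal hU.aemeasurable hUlaw 2)
  have hXU : StronglyMeasurable[obsSigmaS X Z s] (X + U) := by
    rw [obsSigmaS_eq_comap X Z hs]
    exact (comap_measurable (X + U)).stronglyMeasurable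
  have hmoment := condExp_noise_pow_ae_eq (inv_pos.2 hs) hX hU hUlaw
    (hindep.comp measurable_id (measurable_const_mul (√s)⁻¹))
  rw [← obsSigmaS_eq_comap X Z hs] at hmoment
  filter_upwards [condVarS_ae_eq_condVar hm hX2, condVar_ae_eq_of_stronglyMeasurable_add hm
    (hX2.integrable one_le_two) (hU2.integrable one_le_two) hXU,
    condVar_ae_eq_condExp_sq_sub_sq_condExp hm hU2, hmoment 1, hmoment 2] with ω hS hXU hU h1 h2
  simp only [pow_one] at h1
  rw [hS, hXU, hU, posteriorVariance, ← h1, ← h2]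
  rfl

lemma integral_comp_condVarS (hX : Measurable X) (hZ : Measurable Z)
    (hZlaw : μ.map Z = gaussianReal 0 1) (hindep : IndepFun X Z μ) (hX2 : MemLp X 2 μ)
    (hs : 0 < s) {φ : ℝ → ℝ} (hφ : Measurable φ) :
    ∫ ω, φ (condVarS (obsSigmaS X Z s) μ X ω) ∂μ =
      ∫ w, φ (posteriorVariance (μ.map X) s⁻¹ w) * obsDensity (μ.map X) s⁻¹ w := by
  have : IsProbabilityMeasure (μ.map X) := Measure.isProbabilityMeasure_map hX.aemeasurable
  have hcongr : (fun ω => φ (condVarS (obsSigmaS X Z s) μ X ω)) =ᵐ[μ] fun ω =>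
      φ (posteriorVariance (μ.map X) s⁻¹ (X ω + (√s)⁻¹ * Z ω)) :=
    (condVarS_obsSigmaS_ae_eq hX hZ hZlaw hindep hX2 hs).fun_comp φ
  rw [integral_congr_ae hcongr]
  exact integral_comp_add_noise (inv_pos.2 hs) hX.aemeasurable (hZ.const_mul _).aemeasurable
    (map_const_mul_inv_sqrt hZ hZlaw hs.le)
    (hindep.comp measurable_id (measurable_const_mul (√s)⁻¹))
    (hφ.comp (continuous_posteriorVariance (inv_pos.2 hs)).measurable)

lemma hasDerivAt_mmseS (hX : Measurable X) (hZ : Measurable Z)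
    (hZlaw : μ.map Z = gaussianReal 0 1) (hindep : IndepFun X Z μ) (hX2 : MemLp X 2 μ)
    (hs : 0 < s) :
    HasDerivAt (mmseS μ X Z) (-varSq μ X Z s) s := by
  have : IsProbabilityMeasure (μ.map X) := Measure.isProbabilityMeasure_map hX.aemeasurable
  have hchain := (hasDerivAt_integral_posteriorVariance_mul_obsDensity (ν := μ.map X)
    (inv_pos.2 hs)).comp s (hasDerivAt_inv hs.ne')
  have hvarSq := integral_comp_condVarS hX hZ hZlaw hindep hX2 hs (φ := (· ^ 2)) (by fun_prop)
  rw [← hvarSq] at hchain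
  refine (hchain.congr_deriv ?_).congr_of_eventuallyEq ?_
  · simp only [varSq]
    field_simp
  · filter_upwards [lt_mem_nhds hs] with r hr
    rw [mmseS_eq_integral_condVarS hX hZ hX2]
    exact integral_comp_condVarS hX hZ hZlaw hindep hX2 hr measurable_id

end Channel

/-- **Proposition 13 (mean-value representation of the MMSE drop).**
For `0 < snr < snr0` there is `snr_c ∈ (snr, snr0)` with
`mmse(X, snr) − mmse(X, snr0) = E[(Var(X|Y_{snr_c}))²]·(snr0 − snr)`, and
`E[(Var(X|Y_{snr_c}))²] ≤ sup_{γ ∈ (snr, snr0)} E[(Var(X|Y_γ))²] ≤ E[X⁴]`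
(the last bounds in the extended reals, since `E[X⁴]` may be infinite). -/
theorem mmse_drop_mean_value {Ω : Type*} [MeasurableSpace Ω] (μ : Measure Ω)
    [IsProbabilityMeasure μ] (X Z : Ω → ℝ)
    (hX : Measurable X) (hZ : Measurable Z)
    (hZlaw : Measure.map Z μ = gaussianReal 0 1)
    (hindep : IndepFun X Z μ)
    (hX2 : Integrable (fun ω => (X ω) ^ 2) μ)
    (snr snr0 : ℝ) (hsnr : 0 < snr) (hlt : snr < snr0) :
    ∃ snrc ∈ Set.Ioo snr snr0,
      mmseS μ X Z snr - mmseS μ X Z snr0 = varSq μ X Z snrc * (snr0 - snr) ∧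
      ENNReal.ofReal (varSq μ X Z snrc)
        ≤ ⨆ γ ∈ Set.Ioo snr snr0, ENNReal.ofReal (varSq μ X Z γ) ∧
      (⨆ γ ∈ Set.Ioo snr snr0, ENNReal.ofReal (varSq μ X Z γ))
        ≤ ∫⁻ ω, ENNReal.ofReal ((X ω) ^ 4) ∂μ := by
  have hX2' : MemLp X 2 μ := (memLp_two_iff_integrable_sq hX.aestronglyMeasurable).2 hX2
  have hderiv (s : ℝ) (hs : 0 < s) : HasDerivAt (mmseS μ X Z) (-varSq μ X Z s) s :=
    hasDerivAt_mmseS hX hZ hZlaw hindep hX2' hs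
  obtain ⟨c, hc, hslope⟩ := exists_hasDerivAt_eq_slope (mmseS μ X Z) (fun s => -varSq μ X Z s) hlt
    (fun s hs => (hderiv s (hsnr.trans_le hs.1)).continuousAt.continuousWithinAt)
    (fun s hs => hderiv s (hsnr.trans hs.1))
  have hdrop : mmseS μ X Z snr - mmseS μ X Z snr0 = varSq μ X Z c * (snr0 - snr) := by
    rw [eq_div_iff (sub_pos.2 hlt).ne'] at hslope
    linarith
  exact ⟨c, hc, hdrop,
    le_iSup₂ (f := fun γ (_ : γ ∈ Set.Ioo snr snr0) => ENNReal.ofReal (varSq μ X Z γ)) c hc,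
    iSup₂_le fun γ _ => ofReal_integral_condVarS_sq_le (obsSigmaS_le hX hZ γ) hX2'⟩

end
end

section
/- (Appendix E trace inequality for conditional covariances.) Let V be a random vector in ℝⁿ with E[‖V‖⁴] < ∞ and let G be a sub-σ-algebra of the underlying σ-algebra. Then Tr( E[ (Cov(V|G))² ] ) ≤ Tr( E[ (E[V Vᵀ|G])² ] ) − Tr( E[ (E[V|G]·E[V|G]ᵀ)² ] ). -/
open MeasureTheory ProbabilityTheory Real Matrix

noncomputable section

/-- The observation `Y_snr = √snr · X + Z` as a random vector in `ℝⁿ` (modeled as `Fin n → ℝ`). -/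
def obs {Ω : Type*} {n : ℕ} (X Z : Ω → Fin n → ℝ) (snr : ℝ) : Ω → Fin n → ℝ :=
  fun ω i => Real.sqrt snr * X ω i + Z ω i

/-- The σ-algebra generated by the observation `Y_snr`. -/
def obsSigma {Ω : Type*} [MeasurableSpace Ω] {n : ℕ} (X Z : Ω → Fin n → ℝ) (snr : ℝ) :
    MeasurableSpace Ω :=
  MeasurableSpace.comap (obs X Z snr) inferInstance

/-- Componentwise conditional expectation of a random vector given a sub-σ-algebra `m`. -/
def ceVec {Ω : Type*} {n : ℕ} (m : MeasurableSpace Ω) [MeasurableSpace Ω] (μ : Measure Ω)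
    (V : Ω → Fin n → ℝ) : Ω → Fin n → ℝ :=
  fun ω i => (μ[fun ω' => V ω' i | m]) ω

/-- Entrywise conditional expectation of a random matrix given a sub-σ-algebra `m`. -/
def ceMat {Ω : Type*} {n : ℕ} (m : MeasurableSpace Ω) [MeasurableSpace Ω] (μ : Measure Ω)
    (M : Ω → Matrix (Fin n) (Fin n) ℝ) : Ω → Matrix (Fin n) (Fin n) ℝ :=
  fun ω => Matrix.of fun i j => (μ[fun ω' => M ω' i j | m]) ω

/-- Conditional covariance matrix `Cov(V|m) = E[V Vᵀ|m] − E[V|m]·E[V|m]ᵀ` (entrywise). -/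
def covMat {Ω : Type*} {n : ℕ} (m : MeasurableSpace Ω) [MeasurableSpace Ω] (μ : Measure Ω)
    (V : Ω → Fin n → ℝ) : Ω → Matrix (Fin n) (Fin n) ℝ :=
  fun ω => ceMat m μ (fun ω' => Matrix.vecMulVec (V ω') (V ω')) ω
    - Matrix.vecMulVec (ceVec m μ V ω) (ceVec m μ V ω)

/-- Entrywise expectation of a random matrix. -/
def expMat {Ω : Type*} [MeasurableSpace Ω] {n : ℕ} (μ : Measure Ω)
    (M : Ω → Matrix (Fin n) (Fin n) ℝ) : Matrix (Fin n) (Fin n) ℝ :=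
  Matrix.of fun i j => ∫ ω, M ω i j ∂μ

/-- `Tr(E[M])` for a random matrix `M` (expectation entrywise). -/
def trExp {Ω : Type*} [MeasurableSpace Ω] {n : ℕ} (μ : Measure Ω)
    (M : Ω → Matrix (Fin n) (Fin n) ℝ) : ℝ :=
  Matrix.trace (expMat μ M)

/-!
For each fixed vector `x`, the quadratic form `xᵀ Cov(V|G) x` is the conditional variance of `xᵀV`,
so the conditional covariance `C` is almost surely positive semidefinite. With `v = E[V|G]` and
`B = v vᵀ`, the matrix `A = E[V Vᵀ|G]` is `C + B`, and expanding the square gives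
`Tr A² = Tr C² + 2 vᵀCv + Tr B² ≥ Tr C² + Tr B²` almost surely. It remains to take expectations,
which are finite because fourth moments of `V` give `A` and `B` entries in `L²`.
-/

section Matrix

variable {ι R : Type*} [Fintype ι] [DecidableEq ι]

theorem trace_add_sq [CommSemiring R] (A B : Matrix ι ι R) :
    trace ((A + B) ^ 2) = trace (A ^ 2) + 2 * trace (A * B) + trace (B ^ 2) := by
  rw [pow_two, add_mul, mul_add, mul_add]
  simp only [trace_add, trace_mul_comm B A, ← pow_two]
  ring

theorem trace_sub_vecMulVec_sq_le [CommRing R] [PartialOrder R] [IsOrderedRing R]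
    {A : Matrix ι ι R} {v : ι → R} (h : 0 ≤ v ⬝ᵥ ((A - vecMulVec v v) *ᵥ v)) :
    trace ((A - vecMulVec v v) ^ 2) ≤ trace (A ^ 2) - trace (vecMulVec v v ^ 2) := by
  have hcross : trace ((A - vecMulVec v v) * vecMulVec v v) =
      v ⬝ᵥ ((A - vecMulVec v v) *ᵥ v) := by
    rw [mul_vecMulVec, trace_vecMulVec, dotProduct_comm]
  have hsq := trace_add_sq (A - vecMulVec v v) (vecMulVec v v)
  rw [sub_add_cancel, hcross] at hsq
  rw [hsq, add_sub_cancel_right]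
  exact le_add_of_nonneg_right (mul_nonneg zero_le_two h)

end Matrix

section Integrability

variable {Ω ι : Type*} {mΩ : MeasurableSpace Ω} {μ : Measure Ω}

theorem holderTriple_two_mul_two_mul (p : ENNReal) : ENNReal.HolderTriple (2 * p) (2 * p) p where
  inv_add_inv_eq_inv := by
    rw [← two_mul, ENNReal.mul_inv (.inl two_ne_zero) (.inl ENNReal.ofNat_ne_top), ← mul_assoc,
      ENNReal.mul_inv_cancel two_ne_zero ENNReal.ofNat_ne_top, one_mul]

theorem memLp_mul_of_memLp_four {𝕜 : Type*} [NormedRing 𝕜] {f g : Ω → 𝕜} (hf : MemLp f 4 μ)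
    (hg : MemLp g 4 μ) : MemLp (fun ω => f ω * g ω) 2 μ := by
  have : ENNReal.HolderTriple 4 4 2 := by
    simpa only [show (2 * 2 : ENNReal) = 4 by norm_num] using holderTriple_two_mul_two_mul 2
  exact hg.mul' hf

theorem memLp_four_apply_of_integrable_sum_sq_sq [Fintype ι] {V : Ω → ι → ℝ}
    (hV : ∀ i, AEStronglyMeasurable (fun ω => V ω i) μ)
    (hV4 : Integrable (fun ω => (∑ i, V ω i ^ 2) ^ 2) μ) (i : ι) :
    MemLp (fun ω => V ω i) 4 μ := by
  rw [← integrable_norm_rpow_iff (hV i) (by norm_num) (by norm_num)]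
  refine hV4.mono' ((hV i).norm.pow 4 |>.congr (.of_forall fun ω => ?_)) (.of_forall fun ω => ?_)
  · simp
  have hle : V ω i ^ 2 ≤ ∑ j, V ω j ^ 2 :=
    Finset.single_le_sum (fun j _ => sq_nonneg (V ω j)) (Finset.mem_univ i)
  calc ‖‖V ω i‖ ^ (4 : ENNReal).toReal‖ = (V ω i ^ 2) ^ 2 := by
        rw [ENNReal.toReal_ofNat, Real.rpow_ofNat, norm_pow, norm_norm, Real.norm_eq_abs,
          ← pow_mul, Even.pow_abs (by decide)]
    _ ≤ (∑ j, V ω j ^ 2) ^ 2 := by gcongr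

variable [Fintype ι] [DecidableEq ι]

theorem integrable_sq_apply {M : Ω → Matrix ι ι ℝ}
    (hM : ∀ i j, MemLp (fun ω => M ω i j) 2 μ) (i j : ι) :
    Integrable (fun ω => (M ω ^ 2) i j) μ := by
  simp only [pow_two, mul_apply]
  exact integrable_finsetSum _ fun k _ => (hM i k).integrable_mul (hM k j)

theorem integrable_trace_sq {M : Ω → Matrix ι ι ℝ}
    (hM : ∀ i j, MemLp (fun ω => M ω i j) 2 μ) : Integrable (fun ω => trace (M ω ^ 2)) μ :=
  integrable_finsetSum _ fun i _ => integrable_sq_apply hM i i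

end Integrability

section ConditionalMoments

variable {Ω : Type*} {n : ℕ} {m mΩ : MeasurableSpace Ω} {μ : Measure Ω}

theorem trExp_eq_integral_trace {M : Ω → Matrix (Fin n) (Fin n) ℝ}
    (hM : ∀ i, Integrable (fun ω => M ω i i) μ) : trExp μ M = ∫ ω, trace (M ω) ∂μ :=
  (integral_finsetSum Finset.univ fun i _ => hM i).symm

theorem ceVec_dotProduct_ae_eq {V : Ω → Fin n → ℝ} (hV : ∀ i, Integrable (fun ω => V ω i) μ)
    (x : Fin n → ℝ) :
    (fun ω => ceVec m μ V ω ⬝ᵥ x) =ᵐ[μ] μ[fun ω => V ω ⬝ᵥ x | m] := by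
  have hsum : μ[fun ω => V ω ⬝ᵥ x | m] =ᵐ[μ] ∑ i, μ[x i • fun ω => V ω i | m] := by
    refine .trans (.of_eq ?_) (condExp_finsetSum (fun i _ => (hV i).smul (x i)) m)
    congr 1 with ω
    simp [dotProduct, mul_comm]
  have hsmul : ∀ᵐ ω ∂μ, ∀ i, (μ[x i • fun ω => V ω i | m]) ω = x i * ceVec m μ V ω i :=
    ae_all_iff.2 fun i => condExp_smul (x i) (fun ω => V ω i) m
  filter_upwards [hsum, hsmul] with ω hω hsmulω
  rw [hω, Finset.sum_apply, dotProduct_comm]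
  exact (Finset.sum_congr rfl fun i _ => hsmulω i).symm

theorem ceMat_mulVec_ae_eq {M : Ω → Matrix (Fin n) (Fin n) ℝ}
    (hM : ∀ i j, Integrable (fun ω => M ω i j) μ) (x : Fin n → ℝ) :
    (fun ω => ceMat m μ M ω *ᵥ x) =ᵐ[μ] ceVec m μ (fun ω => M ω *ᵥ x) := by
  have hrow : ∀ᵐ ω ∂μ, ∀ i, (ceMat m μ M ω *ᵥ x) i = ceVec m μ (fun ω => M ω *ᵥ x) ω i :=
    ae_all_iff.2 fun i => ceVec_dotProduct_ae_eq (V := fun ω => M ω i) (hM i) x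
  filter_upwards [hrow] with ω hω using funext hω

theorem dotProduct_ceMat_mulVec_ae_eq {M : Ω → Matrix (Fin n) (Fin n) ℝ}
    (hM : ∀ i j, Integrable (fun ω => M ω i j) μ) (x y : Fin n → ℝ) :
    (fun ω => x ⬝ᵥ (ceMat m μ M ω *ᵥ y)) =ᵐ[μ] μ[fun ω => x ⬝ᵥ (M ω *ᵥ y) | m] := by
  have hMy : ∀ i, Integrable (fun ω => (M ω *ᵥ y) i) μ := fun i =>
    integrable_finsetSum Finset.univ fun j _ => (hM i j).mul_const (y j)
  filter_upwards [ceMat_mulVec_ae_eq (m := m) hM y, ceVec_dotProduct_ae_eq (m := m) hMy x]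
    with ω hmulVec hdot
  simp only [hmulVec, dotProduct_comm x, hdot]

theorem isHermitian_covMat (V : Ω → Fin n → ℝ) (ω : Ω) : (covMat m μ V ω).IsHermitian := by
  ext i j
  simp [covMat, ceMat, vecMulVec_apply, mul_comm]

theorem condVar_nonneg_ae (X : Ω → ℝ) : 0 ≤ᵐ[μ] Var[X; μ | m] :=
  condExp_nonneg (.of_forall fun _ => sq_nonneg _)

variable [IsFiniteMeasure μ]

theorem dotProduct_covMat_mulVec_ae_eq_condVar (hm : m ≤ mΩ) {V : Ω → Fin n → ℝ}
    (hV : ∀ i, MemLp (fun ω => V ω i) 2 μ) (x : Fin n → ℝ) :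
    (fun ω => x ⬝ᵥ (covMat m μ V ω *ᵥ x)) =ᵐ[μ] Var[fun ω => V ω ⬝ᵥ x; μ | m] := by
  have hquad (v : Fin n → ℝ) : x ⬝ᵥ (vecMulVec v v *ᵥ x) = (v ⬝ᵥ x) ^ 2 := by
    rw [vecMulVec_mulVec, dotProduct_smul, op_smul_eq_smul, smul_eq_mul,
      dotProduct_comm x, pow_two]
  have hVx : MemLp (fun ω => V ω ⬝ᵥ x) 2 μ :=
    memLp_finsetSum _ fun i _ => (hV i).mul_const (x i)
  have hmean := ceVec_dotProduct_ae_eq (m := m) (fun i => (hV i).integrable one_le_two) x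
  have hsecond := dotProduct_ceMat_mulVec_ae_eq (m := m)
    (M := fun ω => vecMulVec (V ω) (V ω)) (fun i j => (hV i).integrable_mul (hV j)) x x
  simp only [hquad] at hsecond
  filter_upwards [hmean, hsecond, condVar_ae_eq_condExp_sq_sub_sq_condExp hm hVx]
    with ω hmeanω hsecondω hvar
  rw [hvar, covMat, sub_mulVec, dotProduct_sub, hquad, hmeanω, hsecondω]
  rfl

theorem posSemidef_covMat_ae (hm : m ≤ mΩ) {V : Ω → Fin n → ℝ}
    (hV : ∀ i, MemLp (fun ω => V ω i) 2 μ) : ∀ᵐ ω ∂μ, (covMat m μ V ω).PosSemidef := by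
  -- The null set may depend on the test vector, so test only against a countable dense sequence.
  have hdense : ∀ᵐ ω ∂μ, ∀ k, 0 ≤ TopologicalSpace.denseSeq (Fin n → ℝ) k ⬝ᵥ
      (covMat m μ V ω *ᵥ TopologicalSpace.denseSeq (Fin n → ℝ) k) := by
    refine ae_all_iff.2 fun k => ?_
    filter_upwards [dotProduct_covMat_mulVec_ae_eq_condVar hm hV _, condVar_nonneg_ae _]
      with ω hquad hvar
    exact hvar.trans_eq hquad.symm
  filter_upwards [hdense] with ω hω
  have hclosed : IsClosed {x : Fin n → ℝ | 0 ≤ x ⬝ᵥ (covMat m μ V ω *ᵥ x)} :=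
    isClosed_le continuous_const (by fun_prop)
  exact .of_dotProduct_mulVec_nonneg (isHermitian_covMat V ω) fun x =>
    (TopologicalSpace.denseRange_denseSeq _).induction_on x hclosed hω

theorem trace_covMat_sq_le_ae (hm : m ≤ mΩ) {V : Ω → Fin n → ℝ}
    (hV : ∀ i, MemLp (fun ω => V ω i) 2 μ) :
    ∀ᵐ ω ∂μ, trace (covMat m μ V ω ^ 2) ≤
      trace (ceMat m μ (fun ω' => vecMulVec (V ω') (V ω')) ω ^ 2) -
        trace (vecMulVec (ceVec m μ V ω) (ceVec m μ V ω) ^ 2) := by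
  filter_upwards [posSemidef_covMat_ae hm hV] with ω hω
  exact trace_sub_vecMulVec_sq_le (hω.dotProduct_mulVec_nonneg _)

theorem trace_conditional_covariance_inequality_general (hm : m ≤ mΩ) {V : Ω → Fin n → ℝ}
    (hV : ∀ i, MemLp (fun ω => V ω i) 4 μ) :
    trExp μ (fun ω => covMat m μ V ω ^ 2) ≤
      trExp μ (fun ω => ceMat m μ (fun ω' => vecMulVec (V ω') (V ω')) ω ^ 2) -
        trExp μ (fun ω => vecMulVec (ceVec m μ V ω) (ceVec m μ V ω) ^ 2) := by
  have hmean (i : Fin n) : MemLp (fun ω => ceVec m μ V ω i) 4 μ := (hV i).condExp (by norm_num)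
  have hmeanSq (i j : Fin n) :
      MemLp (fun ω => vecMulVec (ceVec m μ V ω) (ceVec m μ V ω) i j) 2 μ :=
    memLp_mul_of_memLp_four (hmean i) (hmean j)
  have hsecond (i j : Fin n) :
      MemLp (fun ω => ceMat m μ (fun ω' => vecMulVec (V ω') (V ω')) ω i j) 2 μ :=
    (memLp_mul_of_memLp_four (hV i) (hV j)).condExp one_le_two
  have hcov (i j : Fin n) : MemLp (fun ω => covMat m μ V ω i j) 2 μ :=
    (hsecond i j).sub (hmeanSq i j)
  rw [trExp_eq_integral_trace fun i => integrable_sq_apply hcov i i,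
    trExp_eq_integral_trace fun i => integrable_sq_apply hsecond i i,
    trExp_eq_integral_trace fun i => integrable_sq_apply hmeanSq i i,
    ← integral_sub (integrable_trace_sq hsecond) (integrable_trace_sq hmeanSq)]
  exact integral_mono_ae (integrable_trace_sq hcov)
    ((integrable_trace_sq hsecond).sub (integrable_trace_sq hmeanSq))
    (trace_covMat_sq_le_ae hm fun i => (hV i).mono_exponent (by norm_num))

end ConditionalMoments

/-- **Appendix E trace inequality for conditional covariances.** For a random vector `V`
with `E[‖V‖⁴] < ∞` and a sub-σ-algebra `G`,
`Tr(E[(Cov(V|G))²]) ≤ Tr(E[(E[VVᵀ|G])²]) − Tr(E[(E[V|G]·E[V|G]ᵀ)²])`. -/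
theorem trace_conditional_covariance_inequality
    {Ω : Type*} [mΩ : MeasurableSpace Ω] (μ : Measure Ω) [IsProbabilityMeasure μ]
    (n : ℕ) (V : Ω → Fin n → ℝ) (hV : Measurable V)
    (G : MeasurableSpace Ω) (hG : G ≤ mΩ)
    (hV4 : Integrable (fun ω => (∑ i, (V ω i) ^ 2) ^ 2) μ) :
    @trExp Ω mΩ n μ (fun ω => (@covMat Ω n G mΩ μ V ω) ^ 2) ≤
      @trExp Ω mΩ n μ (fun ω =>
          (@ceMat Ω n G mΩ μ (fun ω' => Matrix.vecMulVec (V ω') (V ω')) ω) ^ 2)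
      - @trExp Ω mΩ n μ (fun ω =>
          (Matrix.vecMulVec (@ceVec Ω n G mΩ μ V ω) (@ceVec Ω n G mΩ μ V ω)) ^ 2) := by
  exact trace_conditional_covariance_inequality_general hG <|
    memLp_four_apply_of_integrable_sum_sq_sq
      (fun i => ((measurable_pi_apply i).comp hV).aestronglyMeasurable) hV4

end
end
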